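/- (Proposition 1, Markov-order part.) Let d, G, T, k be positive integers with T ≥ k+2, let v : {1, …, T} → {1, …, G} be a regime sequence, and let P = diag(ρ_1, …, ρ_d) with ρ_i ∈ (−1, 1). Let Y_1, …, Y_T be random vectors with values in ℝ^d, jointly Gaussian with mean zero, whose joint covariance matrix (of the concatenation of all Y_t) is positive definite. Assume: (i) [within-regime Markov order k−1] for all t and all m with k ≤ m ≤ t−1 such that v_{t−m} = v_{t−m+1} = ⋯ = v_t, the vector Y_t is conditionally independent of (Y_{t−m}, …, Y_{t−k}) given (Y_{t−k+1}, …, Y_{t−1}); (ii) for every switch time t* (2 ≤ t* ≤ T with v_{t*} ≠ v_{t*−1}): (a) Cov(Y_{t*}, Y_{t*−1}) = P·Cov(Y_{t*−1}, Y_{t*−1}); (b) Y_{t*} is conditionally independent of Y_s given Y_{t*−1} for every 1 ≤ s ≤ t*−2; (c) Cov(Y_{t*+j}, Y_s) = 0 for every j ≥ 1 with t*+j ≤ T and every 1 ≤ s ≤ t*−1. Then the process is Markov of order k: for every t with k+2 ≤ t ≤ T, the vector Y_t is conditionally independent of (Y_1, …, Y_{t−k−1}) given (Y_{t−k}, …,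 Y_{t−1}). -/

import Mathlib

open MeasureTheory ProbabilityTheory

/-- The cross-covariance matrix of two random vectors: entry `(i, j)` is
`E[Xᵢ Yⱼ] − E[Xᵢ] E[Yⱼ]`. -/
noncomputable def covM {Ω : Type*} [MeasurableSpace Ω] (μ : Measure Ω)
    {ι κ : Type*} (X : Ω → ι → ℝ) (Y : Ω → κ → ℝ) : Matrix ι κ ℝ :=
  Matrix.of fun i j =>
    (∫ ω, X ω i * Y ω j ∂μ) - (∫ ω, X ω i ∂μ) * (∫ ω, Y ω j ∂μ)

/-- A random vector (indexed by a finite type) is (jointly) Gaussian if every linear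
combination of its components has a Gaussian distribution on `ℝ`. -/
def IsGaussianVec {Ω : Type*} [MeasurableSpace Ω] (μ : Measure Ω)
    {ι : Type*} [Fintype ι] (X : Ω → ι → ℝ) : Prop :=
  ∀ u : ι → ℝ, ∃ (a : ℝ) (s : NNReal),
    Measure.map (fun ω => ∑ i, u i * X ω i) μ = gaussianReal a s

/-!
For jointly Gaussian vectors, conditional independence of `U` and `V` given `W` says that regressing
`U` on `W` leaves a residual orthogonal to `V` in `L²`, so the theorem is about finite-dimensional
subspaces of a Hilbert space. Let `τ` be the time at which the regime of `t` starts. If `τ > t - k`,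
the variable `Y (τ - 1)` lies in the window of length `k` and separates the earlier past from
`Y τ, …, Y t`: from `Y τ` by the Markov property at the switch, from the later ones because they
are uncorrelated with everything before `τ`. If `τ ≤ t - k`, the variables before `τ` are
uncorrelated with all of `Y (t - k + 1), …, Y t`, and those from `τ` on are covered by the Markov
property within the regime.
-/

section CondOrthogonal

variable {H : Type*} [NormedAddCommGroup H] [InnerProductSpace ℝ H]

/-- `U` and `V` are orthogonal given `W`: every vector of `U` is the sum of a vector of `W` and a
residual orthogonal to both `W` and `V`. For spans of jointly Gaussian variables this is
conditional independence. -/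
def CondOrthogonal (W U V : Submodule ℝ H) : Prop :=
  U ≤ W ⊔ (W ⊔ V)ᗮ

namespace CondOrthogonal

variable {W W' U U' V V' : Submodule ℝ H}

lemma of_isOrtho (h : U ⟂ W ⊔ V) : CondOrthogonal W U V :=
  le_sup_of_le_right h

-- The semi-graphoid rules of decomposition and weak union at once.
lemma mono (h : CondOrthogonal W U V) (hW : W ≤ W') (hWV : W' ⊔ V' ≤ W ⊔ V) (hU : U' ≤ U) :
    CondOrthogonal W' U' V' :=
  hU.trans (h.trans (sup_le_sup hW (Submodule.orthogonal_le hWV)))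

lemma symm [W.HasOrthogonalProjection] (h : CondOrthogonal W U V) : CondOrthogonal W V U := by
  intro x hx
  have hres : x - W.starProjection x ∈ Wᗮ := W.sub_starProjection_mem_orthogonal x
  have hmem : x - W.starProjection x ∈ W ⊔ V :=
    sub_mem (Submodule.mem_sup_right hx) (Submodule.mem_sup_left (W.starProjection_apply_mem x))
  rw [← add_sub_cancel (W.starProjection x) x]
  refine Submodule.add_mem_sup (W.starProjection_apply_mem x) ?_
  rw [← Submodule.inf_orthogonal]
  refine ⟨hres, fun u hu => ?_⟩
  obtain ⟨w, hw, r, hr, rfl⟩ := Submodule.mem_sup.1 (h hu)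
  rw [inner_add_left, hres w hw, zero_add, real_inner_comm]
  exact hr _ hmem

end CondOrthogonal

end CondOrthogonal

section RegimeSwitching

lemma sup_Ico_sup_sup_Ico_le {α : Type*} [SemilatticeSup α] [OrderBot α] (f : ℕ → α)
    {a b c d m : ℕ} (ham : a ≤ m) (hmd : m ≤ d) (hcb : c ≤ b) :
    (Finset.Ico m d).sup f ⊔ (Finset.Ico a m).sup f
      ≤ (Finset.Ico c d).sup f ⊔ (Finset.Ico a b).sup f := by
  rw [← Finset.sup_union, ← Finset.sup_union]
  refine Finset.sup_mono fun s hs => ?_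
  simp only [Finset.mem_union, Finset.mem_Ico] at hs ⊢
  omega

lemma exists_regime_start {α : Type*} (v : ℕ → α) {t : ℕ} (ht : 1 ≤ t) :
    ∃ τ, 1 ≤ τ ∧ τ ≤ t ∧ (∀ s, τ ≤ s → s ≤ t → v s = v t) ∧ (2 ≤ τ → v τ ≠ v (τ - 1)) := by
  classical
  have hex : ∃ τ, 1 ≤ τ ∧ τ ≤ t ∧ ∀ s, τ ≤ s → s ≤ t → v s = v t :=
    ⟨t, ht, le_rfl, fun s hts hst => by rw [le_antisymm hst hts]⟩
  obtain ⟨hτ, hτt, hconst⟩ := Nat.find_spec hex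
  refine ⟨Nat.find hex, hτ, hτt, hconst, fun hτ2 hstay => ?_⟩
  refine Nat.find_min hex (m := Nat.find hex - 1) (by omega) ⟨by omega, by omega, ?_⟩
  intro s hs hst
  obtain rfl | hlt := hs.eq_or_lt
  · exact hstay.symm.trans (hconst _ le_rfl hτt)
  · exact hconst s (by omega) hst

variable {H : Type*} [NormedAddCommGroup H] [InnerProductSpace ℝ H]
  {S : ℕ → Submodule ℝ H} [∀ t, FiniteDimensional ℝ (S t)] {k t τ : ℕ}

lemma condOrthogonal_past_of_recent_switch (hkt : k < t) (hτ : 2 ≤ τ) (hτt : τ ≤ t)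
    (htk : t < τ + k)
    (hswitch : ∀ s, 1 ≤ s → s + 2 ≤ τ → CondOrthogonal (S (τ - 1)) (S τ) (S s))
    (hafter : ∀ u, τ < u → u ≤ t → ∀ s, 1 ≤ s → s < τ → S u ⟂ S s) :
    CondOrthogonal ((Finset.Ico (t - k) t).sup S) (S t) ((Finset.Ico 1 (t - k)).sup S) := by
  have hτ_past : CondOrthogonal (S (τ - 1)) (S τ) ((Finset.Ico 1 (τ - 1)).sup S) := by
    have hpast : CondOrthogonal (S (τ - 1)) ((Finset.Ico 1 (τ - 1)).sup S) (S τ) :=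
      Finset.sup_le fun s hs => by
        rw [Finset.mem_Ico] at hs
        exact (hswitch s hs.1 (by omega)).symm
    exact hpast.symm
  have hregime : CondOrthogonal (S (τ - 1)) ((Finset.Ico τ (t + 1)).sup S)
      ((Finset.Ico 1 (τ - 1)).sup S) := by
    refine Finset.sup_le fun u hu => ?_
    rw [Finset.mem_Ico] at hu
    obtain rfl | hτu := hu.1.eq_or_lt
    · exact hτ_past
    refine CondOrthogonal.of_isOrtho (Submodule.isOrtho_sup_right.2
      ⟨hafter u hτu (by omega) _ (by omega) (by omega), Submodule.IsOrtho.symm ?_⟩)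
    refine Finset.sup_le fun s hs => ?_
    rw [Finset.mem_Ico] at hs
    exact (hafter u hτu (by omega) s hs.1 (by omega)).symm
  have hpast_now : CondOrthogonal ((Finset.Ico (τ - 1) t).sup S)
      ((Finset.Ico 1 (τ - 1)).sup S) (S t) := by
    refine hregime.symm.mono (Finset.le_sup (Finset.mem_Ico.2 ⟨by omega, by omega⟩))
      (sup_le (Finset.sup_le fun s hs => ?_) ?_) le_rfl
    · rw [Finset.mem_Ico] at hs
      obtain rfl | hlt := hs.1.eq_or_lt
      · exact le_sup_left
      · exact le_sup_of_le_right (Finset.le_sup (Finset.mem_Ico.2 ⟨by omega, by omega⟩))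
    · exact le_sup_of_le_right (Finset.le_sup (Finset.mem_Ico.2 ⟨by omega, by omega⟩))
  refine hpast_now.symm.mono (Finset.sup_mono (Finset.Ico_subset_Ico (by omega) le_rfl))
    (sup_Ico_sup_sup_Ico_le S (by omega) (by omega) (by omega)) le_rfl

lemma condOrthogonal_past_of_old_regime (hk : 0 < k) (hτ : 1 ≤ τ) (hτt : τ + k ≤ t)
    (hwithin : CondOrthogonal ((Finset.Ico (t - k + 1) t).sup S) (S t)
      ((Finset.Ico τ (t - k + 1)).sup S))
    (hafter : ∀ u, τ < u → u ≤ t → ∀ s, 1 ≤ s → s < τ → S u ⟂ S s) :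
    CondOrthogonal ((Finset.Ico (t - k) t).sup S) (S t) ((Finset.Ico 1 (t - k)).sup S) := by
  have hpast : CondOrthogonal ((Finset.Ico (t - k + 1) t).sup S)
      ((Finset.Ico 1 (t - k + 1)).sup S) (S t) := by
    refine Finset.sup_le fun s hs => ?_
    rw [Finset.mem_Ico] at hs
    by_cases hsτ : τ ≤ s
    · exact (Finset.le_sup (Finset.mem_Ico.2 ⟨by omega, by omega⟩)).trans hwithin.symm
    · refine CondOrthogonal.of_isOrtho (Submodule.isOrtho_sup_right.2
        ⟨Submodule.IsOrtho.symm ?_, (hafter t (by omega) le_rfl s hs.1 (by omega)).symm⟩)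
      refine Finset.sup_le fun u hu => ?_
      rw [Finset.mem_Ico] at hu
      exact hafter u (by omega) (by omega) s hs.1 (by omega)
  refine hpast.symm.mono (Finset.sup_mono (Finset.Ico_subset_Ico (by omega) le_rfl))
    (sup_Ico_sup_sup_Ico_le S (by omega) (by omega) (by omega)) le_rfl

theorem condOrthogonal_past {α : Type*} (v : ℕ → α) {T : ℕ} (hk : 0 < k)
    (hwithin : ∀ t m, t ≤ T → k ≤ m → m + 1 ≤ t → (∀ s, t - m ≤ s → s ≤ t → v s = v t) →
      CondOrthogonal ((Finset.Ico (t - k + 1) t).sup S) (S t)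
        ((Finset.Ico (t - m) (t - k + 1)).sup S))
    (hswitch : ∀ τ, 2 ≤ τ → τ ≤ T → v τ ≠ v (τ - 1) → ∀ s, 1 ≤ s → s + 2 ≤ τ →
      CondOrthogonal (S (τ - 1)) (S τ) (S s))
    (hafter : ∀ τ, 2 ≤ τ → τ ≤ T → v τ ≠ v (τ - 1) → ∀ j, 1 ≤ j → τ + j ≤ T →
      ∀ s, 1 ≤ s → s + 1 ≤ τ → S (τ + j) ⟂ S s)
    (hkt : k < t) (htT : t ≤ T) :
    CondOrthogonal ((Finset.Ico (t - k) t).sup S) (S t) ((Finset.Ico 1 (t - k)).sup S) := by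
  obtain ⟨τ, hτ, hτt, hconst, hτv⟩ := exists_regime_start v (t := t) (by omega)
  have hafter' : ∀ u, τ < u → u ≤ t → ∀ s, 1 ≤ s → s < τ → S u ⟂ S s := by
    intro u hτu hut s hs hsτ
    obtain ⟨j, rfl⟩ := Nat.exists_eq_add_of_lt hτu
    exact hafter τ (by omega) (by omega) (hτv (by omega)) (j + 1) (by omega) (by omega) s hs hsτ
  obtain hold | hrecent := le_or_gt (τ + k) t
  · have htτ : t - (t - τ) = τ := by omega
    have hregime := hwithin t (t - τ) htT (by omega) (by omega) (htτ.symm ▸ hconst)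
    rw [htτ] at hregime
    exact condOrthogonal_past_of_old_regime hk hτ hold hregime hafter'
  · exact condOrthogonal_past_of_recent_switch hkt (by omega) hτt hrecent
      (hswitch τ (by omega) (by omega) (hτv (by omega))) hafter'

end RegimeSwitching

lemma strongDual_apply_eq_mul (L : StrongDual ℝ ℝ) (x : ℝ) : L x = L 1 * x := by
  rw [mul_comm, ← smul_eq_mul, ← map_smul, smul_eq_mul, mul_one]

section LinearSpan

variable {Ω E F : Type*} [MeasurableSpace Ω] {μ : Measure Ω}
  [NormedAddCommGroup E] [NormedSpace ℝ E] [NormedAddCommGroup F] [NormedSpace ℝ F]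

/-- The pairs `(L, f)` of a functional `L` and the class `f ∈ L²` of the centred variable `L X`.
Using a graph instead of a linear map leaves no square-integrability proof to carry around. -/
def functionalGraph (μ : Measure Ω) (X : Ω → E) : Submodule ℝ (StrongDual ℝ E × Lp ℝ 2 μ) where
  carrier := {p | p.2 =ᵐ[μ] fun ω => p.1 (X ω - μ[X])}
  zero_mem' := Lp.coeFn_zero ℝ 2 μ
  add_mem' {p q} hp hq := by
    rw [Set.mem_ofPred_eq] at hp hq ⊢
    filter_upwards [Lp.coeFn_add p.2 q.2, hp, hq] with ω hadd hpω hqω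
    simp only [Prod.snd_add, hadd, Pi.add_apply, hpω, hqω, Prod.fst_add,
      add_apply]
  smul_mem' c p hp := by
    rw [Set.mem_ofPred_eq] at hp ⊢
    filter_upwards [Lp.coeFn_smul c p.2, hp] with ω hsmul hpω
    simp only [Prod.smul_snd, hsmul, Pi.smul_apply, hpω, Prod.smul_fst,
      smul_apply]

/-- The Gaussian space of a random vector: the subspace of `L²` formed by the centred continuous
linear functionals of `X`. -/
def linearSpan (μ : Measure Ω) (X : Ω → E) : Submodule ℝ (Lp ℝ 2 μ) :=
  (functionalGraph μ X).map (LinearMap.snd ℝ (StrongDual ℝ E) (Lp ℝ 2 μ))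

lemma mem_linearSpan {X : Ω → E} {f : Lp ℝ 2 μ} :
    f ∈ linearSpan μ X ↔ ∃ L : StrongDual ℝ E, f =ᵐ[μ] fun ω => L (X ω - μ[X]) :=
  ⟨fun ⟨p, hp, hpf⟩ => ⟨p.1, hpf ▸ hp⟩, fun ⟨L, hL⟩ => ⟨(L, f), hL, rfl⟩⟩

lemma linearSpan_le_span_singleton {X : Ω → ℝ} {f : Lp ℝ 2 μ} (hf : f =ᵐ[μ] fun ω => X ω - μ[X]) :
    linearSpan μ X ≤ ℝ ∙ f := by
  intro g hg
  obtain ⟨L, hL⟩ := mem_linearSpan.1 hg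
  refine Submodule.mem_span_singleton.2 ⟨L 1, Lp.ext ?_⟩
  filter_upwards [hf, hL, Lp.coeFn_smul (L 1) f] with ω hfω hLω hsmul
  rw [hsmul, Pi.smul_apply, hfω, hLω, smul_eq_mul, strongDual_apply_eq_mul L (_ - _)]

instance [FiniteDimensional ℝ E] (X : Ω → E) : FiniteDimensional ℝ (linearSpan μ X) := by
  have hfst : Function.Injective
      ((LinearMap.fst ℝ (StrongDual ℝ E) (Lp ℝ 2 μ)).domRestrict (functionalGraph μ X)) := by
    rintro ⟨p, hp⟩ ⟨q, hq⟩ (hpq : p.1 = q.1)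
    have hp' : p.2 =ᵐ[μ] fun ω => p.1 (X ω - μ[X]) := hp
    rw [hpq] at hp'
    exact Subtype.ext (Prod.ext hpq (Lp.ext (hp'.trans (Filter.EventuallyEq.symm hq))))
  have : FiniteDimensional ℝ (functionalGraph μ X) := Module.Finite.of_injective _ hfst
  unfold linearSpan
  infer_instance

lemma exists_mem_linearSpan [IsFiniteMeasure μ] {X : Ω → E} (hX : MemLp X 2 μ)
    (L : StrongDual ℝ E) :
    ∃ f ∈ linearSpan μ X, f =ᵐ[μ] fun ω => L (X ω - μ[X]) := by
  have hLX : MemLp (fun ω => L (X ω - μ[X])) 2 μ := L.comp_memLp' (hX.sub (memLp_const _))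
  exact ⟨hLX.toLp, mem_linearSpan.2 ⟨L, hLX.coeFn_toLp⟩, hLX.coeFn_toLp⟩

variable [CompleteSpace E] [CompleteSpace F]

lemma linearSpan_clm_comp_le (A : E →L[ℝ] F) {X : Ω → E} (hX : Integrable X μ) :
    linearSpan μ (fun ω => A (X ω)) ≤ linearSpan μ X := by
  intro f hf
  obtain ⟨L, hL⟩ := mem_linearSpan.1 hf
  refine mem_linearSpan.2 ⟨L.comp A, hL.trans (.of_forall fun ω => ?_)⟩
  simp only [A.integral_comp_comm hX, ContinuousLinearMap.comp_apply, map_sub]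

lemma inner_eq_covariance {X : Ω → E} {Y : Ω → F} (hX : Integrable X μ) (hY : Integrable Y μ)
    {L : StrongDual ℝ E} {M : StrongDual ℝ F} {f g : Lp ℝ 2 μ}
    (hf : f =ᵐ[μ] fun ω => L (X ω - μ[X])) (hg : g =ᵐ[μ] fun ω => M (Y ω - μ[Y])) :
    inner ℝ f g = cov[fun ω => L (X ω), fun ω => M (Y ω); μ] := by
  rw [L2.inner_def, covariance, L.integral_comp_comm hX, M.integral_comp_comm hY]
  refine integral_congr_ae ?_
  filter_upwards [hf, hg] with ω hfω hgω
  simp only [hfω, hgω, map_sub, RCLike.inner_apply, conj_trivial, mul_comm]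

variable [IsFiniteMeasure μ]

lemma linearSpan_prodMk {X : Ω → E} {Y : Ω → F} (hX : MemLp X 2 μ) (hY : MemLp Y 2 μ) :
    linearSpan μ (fun ω => (X ω, Y ω)) = linearSpan μ X ⊔ linearSpan μ Y := by
  have hXi : Integrable X μ := hX.integrable one_le_two
  have hYi : Integrable Y μ := hY.integrable one_le_two
  refine le_antisymm (fun f hf => ?_) (sup_le ?_ ?_)
  · obtain ⟨L, hL⟩ := mem_linearSpan.1 hf
    obtain ⟨g, hg, hgX⟩ := exists_mem_linearSpan hX (L.comp (.inl ℝ E F))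
    obtain ⟨h, hh, hhY⟩ := exists_mem_linearSpan hY (L.comp (.inr ℝ E F))
    suffices f = g + h from this ▸ Submodule.add_mem_sup hg hh
    refine Lp.ext ?_
    filter_upwards [hL, hgX, hhY, Lp.coeFn_add g h] with ω hfω hgω hhω hadd
    rw [hfω, hadd, Pi.add_apply, hgω, hhω, integral_pair hXi hYi]
    simp [← map_add]
  · exact linearSpan_clm_comp_le (X := fun ω => (X ω, Y ω)) (.fst ℝ E F) (hXi.prodMk hYi)
  · exact linearSpan_clm_comp_le (X := fun ω => (X ω, Y ω)) (.snd ℝ E F) (hXi.prodMk hYi)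

lemma linearSpan_pi {κ : Type*} [Fintype κ] {X : κ → Ω → E} (hX : ∀ j, MemLp (X j) 2 μ) :
    linearSpan μ (fun ω j => X j ω) = ⨆ j, linearSpan μ (X j) := by
  classical
  have hXi : ∀ j, Integrable (X j) μ := fun j => (hX j).integrable one_le_two
  refine le_antisymm (fun f hf => ?_) (iSup_le fun j => ?_)
  · obtain ⟨L, hL⟩ := mem_linearSpan.1 hf
    choose g hg hgX using fun j =>
      exists_mem_linearSpan (hX j) (L.comp (.single ℝ (fun _ => E) j))
    suffices f = ∑ j, g j from
      this ▸ sum_mem fun j _ => Submodule.mem_iSup_of_mem j (hg j)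
    refine Lp.ext ?_
    filter_upwards [hL, ae_all_iff.2 hgX, Lp.coeFn_finsetSum Finset.univ g] with ω hfω hgω hsum
    rw [hfω, hsum, Finset.sum_apply,
      ← Finset.univ_sum_single ((fun j => X j ω) - ∫ x, (fun j => X j x) ∂μ), map_sum]
    refine Finset.sum_congr rfl fun j _ => ?_
    rw [hgω, Pi.sub_apply, eval_integral hXi, ContinuousLinearMap.comp_apply,
      ContinuousLinearMap.single_apply]
  · exact linearSpan_clm_comp_le (X := fun ω j => X j ω) (.proj (R := ℝ) (φ := fun _ => E) j)
      (Integrable.of_eval hXi)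

lemma isOrtho_linearSpan_iff {X : Ω → E} {Y : Ω → F} (hX : MemLp X 2 μ) (hY : MemLp Y 2 μ) :
    linearSpan μ X ⟂ linearSpan μ Y ↔ ∀ (L : StrongDual ℝ E) (M : StrongDual ℝ F),
      cov[fun ω => L (X ω), fun ω => M (Y ω); μ] = 0 := by
  have hinner {L : StrongDual ℝ E} {M : StrongDual ℝ F} {f g : Lp ℝ 2 μ} :=
    inner_eq_covariance (L := L) (M := M) (f := f) (g := g) (hX.integrable one_le_two)
      (hY.integrable one_le_two)
  rw [Submodule.isOrtho_iff_inner_eq]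
  refine ⟨fun h L M => ?_, fun h f hf g hg => ?_⟩
  · obtain ⟨f, hf, hfX⟩ := exists_mem_linearSpan hX L
    obtain ⟨g, hg, hgY⟩ := exists_mem_linearSpan hY M
    rw [← hinner hfX hgY, h f hf g hg]
  · obtain ⟨L, hL⟩ := mem_linearSpan.1 hf
    obtain ⟨M, hM⟩ := mem_linearSpan.1 hg
    rw [hinner hL hM, h L M]

end LinearSpan

section CondIndep

variable {Ω : Type*} [MeasurableSpace Ω] {μ : Measure Ω}

lemma map_prodMk_eq_compProd_of_indepFun [IsProbabilityMeasure μ] {β γ δ ζ : Type*}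
    [MeasurableSpace β] [MeasurableSpace γ] [MeasurableSpace δ] [MeasurableSpace ζ]
    [StandardBorelSpace ζ] [Nonempty ζ] {W : Ω → γ} {R : Ω → β} {V : Ω → ζ}
    (hW : Measurable W) (hR : Measurable R) (hV : Measurable V)
    (h : IndepFun R (fun ω => (W ω, V ω)) μ) {φ : γ × β → δ} (hφ : Measurable φ) :
    μ.map (fun ω => ((W ω, φ (W ω, R ω)), V ω))
      = μ.map (fun ω => (W ω, φ (W ω, R ω))) ⊗ₘ (condDistrib V W μ).prodMkRight δ := by
  have : IsProbabilityMeasure (μ.map R) := Measure.isProbabilityMeasure_map hR.aemeasurable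
  have : IsProbabilityMeasure (μ.map W) := Measure.isProbabilityMeasure_map hW.aemeasurable
  have hRWV : μ.map (fun ω => (R ω, W ω, V ω))
      = (μ.map R).prod (μ.map W ⊗ₘ condDistrib V W μ) := by
    rw [compProd_map_condDistrib hV.aemeasurable]
    exact (indepFun_iff_map_prod_eq_prod_map_map hR.aemeasurable (hW.prodMk hV).aemeasurable).1 h
  have hRW : μ.map (fun ω => (R ω, W ω)) = (μ.map R).prod (μ.map W) :=
    (indepFun_iff_map_prod_eq_prod_map_map hR.aemeasurable hW.aemeasurable).1
      (h.comp measurable_id measurable_fst)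
  refine Measure.ext_of_lintegral _ fun F hF => ?_
  have hinner : Measurable fun p : γ × δ => ∫⁻ v, F (p, v) ∂condDistrib V W μ p.1 :=
    hF.lintegral_kernel_prod_right' (κ := (condDistrib V W μ).prodMkRight δ)
  have hinner_comp : Measurable fun q : β × γ =>
      ∫⁻ v, F ((q.2, φ (q.2, q.1)), v) ∂condDistrib V W μ q.2 :=
    hinner.comp (f := fun q : β × γ => (q.2, φ (q.2, q.1))) (by fun_prop)
  calc ∫⁻ x, F x ∂μ.map (fun ω => ((W ω, φ (W ω, R ω)), V ω))
      = ∫⁻ q, F ((q.2.1, φ (q.2.1, q.1)), q.2.2) ∂μ.map (fun ω => (R ω, W ω, V ω)) := by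
        rw [lintegral_map hF (by fun_prop), lintegral_map (by fun_prop) (by fun_prop)]
    _ = ∫⁻ q, ∫⁻ v, F ((q.2, φ (q.2, q.1)), v) ∂condDistrib V W μ q.2
          ∂μ.map (fun ω => (R ω, W ω)) := by
        rw [hRWV, hRW, lintegral_prod _ (by fun_prop),
          lintegral_prod _ hinner_comp.aemeasurable]
        exact lintegral_congr fun r => Measure.lintegral_compProd (by fun_prop)
    _ = ∫⁻ p, ∫⁻ v, F (p, v) ∂condDistrib V W μ p.1 ∂μ.map (fun ω => (W ω, φ (W ω, R ω))) := by
        rw [lintegral_map hinner_comp (by fun_prop), lintegral_map hinner (by fun_prop)]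
    _ = ∫⁻ x, F x ∂(μ.map (fun ω => (W ω, φ (W ω, R ω))) ⊗ₘ
          (condDistrib V W μ).prodMkRight δ) := by
        simp only [Measure.lintegral_compProd hF, Kernel.prodMkRight_apply]

lemma condIndepFun_of_indepFun_prodMk [StandardBorelSpace Ω] [IsProbabilityMeasure μ]
    {β γ δ ζ : Type*} [MeasurableSpace β] [MeasurableSpace γ]
    [MeasurableSpace δ] [StandardBorelSpace δ] [Nonempty δ]
    [MeasurableSpace ζ] [StandardBorelSpace ζ] [Nonempty ζ]
    {W : Ω → γ} {R : Ω → β} {V : Ω → ζ} (hW : Measurable W) (hR : Measurable R) (hV : Measurable V)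
    (h : IndepFun R (fun ω => (W ω, V ω)) μ) {φ : γ × β → δ} (hφ : Measurable φ) :
    CondIndepFun (MeasurableSpace.comap W inferInstance) hW.comap_le
      (fun ω => φ (W ω, R ω)) V μ := by
  rw [condIndepFun_iff_condDistrib_prod_ae_eq_prodMkRight hV (by fun_prop) hW]
  exact condDistrib_ae_eq_of_measure_eq_compProd _ hV.aemeasurable
    (map_prodMk_eq_compProd_of_indepFun hW hR hV h hφ)

lemma condExp_ae_eq_add_integral_of_indepFun_sub {γ : Type*} [MeasurableSpace γ]
    [IsFiniteMeasure μ] {W : Ω → γ} {X : Ω → ℝ} {p : γ → ℝ} (hW : Measurable W)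
    (hX : Measurable X) (hXi : Integrable X μ) (hpi : Integrable (fun ω => p (W ω)) μ)
    (hp : Measurable p) (h : IndepFun (fun ω => X ω - p (W ω)) W μ) :
    μ[X | MeasurableSpace.comap W inferInstance]
      =ᵐ[μ] fun ω => p (W ω) + ∫ x, X x - p (W x) ∂μ := by
  have hpW : μ[fun ω => p (W ω) | MeasurableSpace.comap W inferInstance] = fun ω => p (W ω) :=
    condExp_of_stronglyMeasurable hW.comap_le
      (hp.comp (comap_measurable W)).stronglyMeasurable hpi
  have hres : μ[fun ω => X ω - p (W ω) | MeasurableSpace.comap W inferInstance]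
      =ᵐ[μ] fun _ => ∫ x, X x - p (W x) ∂μ :=
    condExp_indep_eq (hX.sub (hp.comp hW)).comap_le hW.comap_le
      (comap_measurable _).stronglyMeasurable h
  filter_upwards [hres, condExp_sub hXi hpi (MeasurableSpace.comap W inferInstance)]
    with ω hresω hsub
  rw [← hresω, show (fun ω => X ω - p (W ω)) = X - fun ω => p (W ω) from rfl, hsub, Pi.sub_apply,
    hpW, add_sub_cancel]

end CondIndep

section CondIndepResidual

variable {Ω : Type*} {m mΩ : MeasurableSpace Ω} [StandardBorelSpace Ω] {μ : Measure Ω}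
  [IsFiniteMeasure μ] {hm : m ≤ mΩ} {f g : Ω → ℝ}

lemma condExp_mul_of_condIndepFun (h : CondIndepFun m hm f g μ)
    (hf : Measurable f) (hg : Measurable g) (hfi : Integrable f μ) (hgi : Integrable g μ)
    (hfg : Integrable (f * g) μ) : μ[f * g | m] =ᵐ[μ] μ[f | m] * μ[g | m] := by
  have hprod := ae_of_ae_trim hm ((condIndepFun_iff_map_prod_eq_prod_map_map hf hg).1 h)
  filter_upwards [hprod, condExp_ae_eq_integral_condExpKernel hm hfi,
    condExp_ae_eq_integral_condExpKernel hm hgi,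
    condExp_ae_eq_integral_condExpKernel hm hfg] with ω hprodω hfω hgω hfgω
  have hind : IndepFun f g (condExpKernel μ m ω) := by
    rw [indepFun_iff_map_prod_eq_prod_map_map hf.aemeasurable hg.aemeasurable]
    rwa [Kernel.map_apply _ (hf.prodMk hg), Kernel.prod_apply, Kernel.map_apply _ hf,
      Kernel.map_apply _ hg] at hprodω
  rw [Pi.mul_apply, hfω, hgω, hfgω]
  exact hind.integral_mul_eq_mul_integral hf.aestronglyMeasurable hg.aestronglyMeasurable

lemma integral_sub_condExp_mul_eq_zero_of_condIndepFun (h : CondIndepFun m hm f g μ)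
    (hf : Measurable f) (hg : Measurable g) (hf2 : MemLp f 2 μ) (hg2 : MemLp g 2 μ) :
    ∫ ω, (f - μ[f | m]) ω * g ω ∂μ = 0 := by
  have hfi := hf2.integrable one_le_two
  have hgi := hg2.integrable one_le_two
  have hfg : Integrable (f * g) μ := hf2.integrable_mul hg2
  have hpg : Integrable (μ[f | m] * g) μ := MemLp.integrable_mul (hf2.condExp one_le_two) hg2
  have hcond : μ[f * g | m] =ᵐ[μ] μ[μ[f | m] * g | m] :=
    (condExp_mul_of_condIndepFun h hf hg hfi hgi hfg).trans
      (condExp_mul_of_stronglyMeasurable_left stronglyMeasurable_condExp hpg hgi).symm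
  calc ∫ ω, (f - μ[f | m]) ω * g ω ∂μ = ∫ ω, (f * g) ω ∂μ - ∫ ω, (μ[f | m] * g) ω ∂μ := by
        rw [← integral_sub hfg hpg]
        simp only [Pi.sub_apply, Pi.mul_apply, sub_mul]
    _ = ∫ ω, μ[f * g | m] ω ∂μ - ∫ ω, μ[μ[f | m] * g | m] ω ∂μ := by
        rw [integral_condExp hm, integral_condExp hm]
    _ = 0 := by rw [integral_congr_ae hcond, sub_self]

end CondIndepResidual

section Regression

variable {Ω E ι : Type*} [MeasurableSpace Ω] {μ : Measure Ω} [IsFiniteMeasure μ]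
  [NormedAddCommGroup E] [NormedSpace ℝ E] [CompleteSpace E] {W : Ω → E}

lemma exists_isOrtho_linearSpan_sub_clm {X : Ω → ℝ} (hW : MemLp W 2 μ)
    (hX : MemLp X 2 μ) {K : Submodule ℝ (Lp ℝ 2 μ)} (h : linearSpan μ X ≤ linearSpan μ W ⊔ Kᗮ) :
    ∃ L : StrongDual ℝ E, linearSpan μ (fun ω => X ω - L (W ω)) ⟂ K := by
  obtain ⟨f, hf, hfX⟩ := exists_mem_linearSpan hX (.id ℝ ℝ)
  obtain ⟨p, hp, r, hr, rfl⟩ := Submodule.mem_sup.1 (h hf)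
  obtain ⟨L, hL⟩ := mem_linearSpan.1 hp
  have hmean : ∫ ω, X ω - L (W ω) ∂μ = μ[X] - L μ[W] := by
    rw [← L.integral_comp_comm (hW.integrable one_le_two)]
    exact integral_sub (hX.integrable one_le_two) ((L.comp_memLp' hW).integrable one_le_two)
  have hrX : r =ᵐ[μ] fun ω => X ω - L (W ω) - ∫ ω, X ω - L (W ω) ∂μ := by
    filter_upwards [hL, hfX, Lp.coeFn_add p r] with ω hLω hfω hadd
    rw [hadd, Pi.add_apply, hLω, ContinuousLinearMap.id_apply, map_sub] at hfω
    rw [hmean]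
    linarith
  exact ⟨L, (linearSpan_le_span_singleton hrX).trans
    ((Submodule.span_singleton_le_iff_mem _ _).2 hr)⟩

lemma exists_isOrtho_linearSpan_sub_clm_pi [Fintype ι] {U : Ω → ι → ℝ}
    (hW : MemLp W 2 μ) (hU : MemLp U 2 μ) {K : Submodule ℝ (Lp ℝ 2 μ)}
    (h : linearSpan μ U ≤ linearSpan μ W ⊔ Kᗮ) :
    ∃ A : E →L[ℝ] (ι → ℝ), linearSpan μ (fun ω => U ω - A (W ω)) ⟂ K := by
  have hUi : ∀ i, MemLp (fun ω => U ω i) 2 μ := fun i => hU.eval i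
  have hle : ∀ i, linearSpan μ (fun ω => U ω i) ≤ linearSpan μ U := fun i =>
    linearSpan_clm_comp_le (.proj (R := ℝ) (φ := fun _ => ℝ) i) (hU.integrable one_le_two)
  choose L hL using fun i => exists_isOrtho_linearSpan_sub_clm hW (hUi i) ((hle i).trans h)
  have hres : linearSpan μ (fun ω i => U ω i - L i (W ω)) ⟂ K := by
    rw [linearSpan_pi (X := fun i ω => U ω i - L i (W ω))
      fun i => (hUi i).sub ((L i).comp_memLp' hW)]
    exact Submodule.isOrtho_iSup_left.2 hL
  exact ⟨.pi L, hres⟩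

lemma linearSpan_le_sup_orthogonal_of_isOrtho_sub_clm {G : Type*} [NormedAddCommGroup G]
    [NormedSpace ℝ G] [CompleteSpace G] {U : Ω → G} (hW : MemLp W 2 μ) (hU : MemLp U 2 μ)
    {A : E →L[ℝ] G} {K : Submodule ℝ (Lp ℝ 2 μ)}
    (h : linearSpan μ (fun ω => U ω - A (W ω)) ⟂ K) :
    linearSpan μ U ≤ linearSpan μ W ⊔ Kᗮ := by
  have hR : MemLp (fun ω => U ω - A (W ω)) 2 μ := hU.sub (A.comp_memLp' hW)
  calc linearSpan μ U
      = linearSpan μ (fun ω => (A ∘L .fst ℝ E G + .snd ℝ E G) (W ω, U ω - A (W ω))) := by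
        simp
    _ ≤ linearSpan μ (fun ω => (W ω, U ω - A (W ω))) :=
        linearSpan_clm_comp_le _ ((hW.integrable one_le_two).prodMk (hR.integrable one_le_two))
    _ = linearSpan μ W ⊔ linearSpan μ (fun ω => U ω - A (W ω)) := linearSpan_prodMk hW hR
    _ ≤ linearSpan μ W ⊔ Kᗮ := sup_le_sup le_rfl h

end Regression

section Gaussian

variable {Ω E F G ι : Type*} [MeasurableSpace Ω] {μ : Measure Ω}
  [NormedAddCommGroup E] [NormedSpace ℝ E] [FiniteDimensional ℝ E] [MeasurableSpace E]
  [BorelSpace E] [NormedAddCommGroup F] [NormedSpace ℝ F] [FiniteDimensional ℝ F]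
  [MeasurableSpace F] [BorelSpace F] [NormedAddCommGroup G] [NormedSpace ℝ G]
  [FiniteDimensional ℝ G] [MeasurableSpace G] [BorelSpace G] {W : Ω → E} {V : Ω → F}

lemma indepFun_of_isOrtho_linearSpan (h : HasGaussianLaw (fun ω => (W ω, V ω)) μ)
    (hWV : linearSpan μ W ⟂ linearSpan μ V) : IndepFun W V μ := by
  have := FiniteDimensional.complete ℝ E
  have := FiniteDimensional.complete ℝ F
  have := h.isProbabilityMeasure
  exact h.indepFun_of_covariance_strongDual
    ((isOrtho_linearSpan_iff h.fst.memLp_two h.snd.memLp_two).1 hWV)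

/-- Subtracting the regression of `U` on `W` leaves a residual which, being Gaussian and
uncorrelated with `(W, V)`, is independent of it. -/
theorem condIndepFun_of_condOrthogonal [StandardBorelSpace Ω] [IsProbabilityMeasure μ]
    [Fintype ι] {U : Ω → ι → ℝ} (hWm : Measurable W) (hUm : Measurable U) (hVm : Measurable V)
    (hG : HasGaussianLaw (fun ω => (W ω, U ω, V ω)) μ)
    (h : CondOrthogonal (linearSpan μ W) (linearSpan μ U) (linearSpan μ V)) :
    CondIndepFun (MeasurableSpace.comap W inferInstance) hWm.comap_le U V μ := by
  have := FiniteDimensional.complete ℝ E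
  have := FiniteDimensional.complete ℝ F
  have hW : MemLp W 2 μ := hG.fst.memLp_two
  have hU : MemLp U 2 μ := hG.snd.fst.memLp_two
  have hV : MemLp V 2 μ := hG.snd.snd.memLp_two
  obtain ⟨A, hA⟩ := exists_isOrtho_linearSpan_sub_clm_pi hW hU h
  rw [← linearSpan_prodMk hW hV] at hA
  have hRWV : HasGaussianLaw (fun ω => (U ω - A (W ω), W ω, V ω)) μ :=
    hG.map_fun (((ContinuousLinearMap.fst ℝ (ι → ℝ) F ∘L .snd ℝ E ((ι → ℝ) × F)) -
      A ∘L .fst ℝ E ((ι → ℝ) × F)).prod ((ContinuousLinearMap.fst ℝ E ((ι → ℝ) × F)).prod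
        (ContinuousLinearMap.snd ℝ (ι → ℝ) F ∘L .snd ℝ E ((ι → ℝ) × F))))
  have hind : IndepFun (fun ω => U ω - A (W ω)) (fun ω => (W ω, V ω)) μ :=
    indepFun_of_isOrtho_linearSpan hRWV hA
  have hRm : Measurable fun ω => U ω - A (W ω) := hUm.sub (A.measurable.comp hWm)
  simpa only [sub_add_cancel] using condIndepFun_of_indepFun_prodMk hWm hRm hVm hind
    (φ := fun q => q.2 + A q.1) (measurable_snd.add (A.measurable.comp measurable_fst))

lemma isOrtho_linearSpan_sub_clm_of_condIndepFun [StandardBorelSpace Ω] [IsProbabilityMeasure μ]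
    {U : Ω → G} (hWm : Measurable W) (hUm : Measurable U) (hVm : Measurable V)
    (hWU : HasGaussianLaw (fun ω => (W ω, U ω)) μ) (hV : MemLp V 2 μ)
    (h : CondIndepFun (MeasurableSpace.comap W inferInstance) hWm.comap_le U V μ)
    {A : E →L[ℝ] G} (hA : linearSpan μ (fun ω => U ω - A (W ω)) ⟂ linearSpan μ W) :
    linearSpan μ (fun ω => U ω - A (W ω)) ⟂ linearSpan μ V := by
  have := FiniteDimensional.complete ℝ F
  have := FiniteDimensional.complete ℝ G
  have hU : MemLp U 2 μ := hWU.snd.memLp_two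
  have hAW : MemLp (fun ω => A (W ω)) 2 μ := A.comp_memLp' hWU.fst.memLp_two
  have hind : IndepFun (fun ω => U ω - A (W ω)) W μ :=
    indepFun_of_isOrtho_linearSpan (hWU.map_fun ((ContinuousLinearMap.snd ℝ E G -
      A ∘L .fst ℝ E G).prod (ContinuousLinearMap.fst ℝ E G))) hA
  have hR : MemLp (fun ω => U ω - A (W ω)) 2 μ := hU.sub hAW
  refine (isOrtho_linearSpan_iff hR hV).2 fun a M => ?_
  simp only [map_sub]
  have haU : MemLp (fun ω => a (U ω)) 2 μ := a.comp_memLp' hU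
  have hind_a : IndepFun (fun ω => a (U ω) - a (A (W ω))) W μ := by
    simpa only [Function.comp_def, map_sub, id_eq] using hind.comp a.measurable measurable_id
  have hcond : μ[fun ω => a (U ω) | MeasurableSpace.comap W inferInstance]
      =ᵐ[μ] fun ω => a (A (W ω)) + ∫ x, a (U x) - a (A (W x)) ∂μ :=
    condExp_ae_eq_add_integral_of_indepFun_sub hWm (a.measurable.comp hUm)
      (haU.integrable one_le_two) ((a.comp_memLp' hAW).integrable one_le_two)
      (a.measurable.comp A.measurable) hind_a
  have hzero := integral_sub_condExp_mul_eq_zero_of_condIndepFun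
    (h.comp a.measurable (M.measurable.sub_const (∫ x, M (V x) ∂μ)))
    (a.measurable.comp hUm) ((M.measurable.comp hVm).sub_const _) haU
    ((M.comp_memLp' hV).sub (memLp_const _))
  rw [covariance, ← hzero]
  refine integral_congr_ae ?_
  filter_upwards [hcond] with ω hω
  simp only [Function.comp_def, Pi.sub_apply, hω, sub_sub]

theorem condOrthogonal_of_condIndepFun [StandardBorelSpace Ω] [IsProbabilityMeasure μ]
    [Fintype ι] {U : Ω → ι → ℝ} (hWm : Measurable W) (hUm : Measurable U) (hVm : Measurable V)
    (hG : HasGaussianLaw (fun ω => (W ω, U ω, V ω)) μ)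
    (h : CondIndepFun (MeasurableSpace.comap W inferInstance) hWm.comap_le U V μ) :
    CondOrthogonal (linearSpan μ W) (linearSpan μ U) (linearSpan μ V) := by
  have := FiniteDimensional.complete ℝ E
  have hW : MemLp W 2 μ := hG.fst.memLp_two
  have hU : MemLp U 2 μ := hG.snd.fst.memLp_two
  have hWU : HasGaussianLaw (fun ω => (W ω, U ω)) μ :=
    hG.map_fun ((ContinuousLinearMap.fst ℝ E ((ι → ℝ) × F)).prod
      (.fst ℝ (ι → ℝ) F ∘L .snd ℝ E ((ι → ℝ) × F)))
  obtain ⟨A, hA⟩ := exists_isOrtho_linearSpan_sub_clm_pi hW hU (K := linearSpan μ W) (by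
    rw [Submodule.sup_orthogonal_of_hasOrthogonalProjection]
    exact le_top)
  exact linearSpan_le_sup_orthogonal_of_isOrtho_sub_clm hW hU (Submodule.isOrtho_sup_right.2
    ⟨hA, isOrtho_linearSpan_sub_clm_of_condIndepFun hWm hUm hVm hWU hG.snd.snd.memLp_two h hA⟩)

theorem condIndepFun_iff_condOrthogonal [StandardBorelSpace Ω] [IsProbabilityMeasure μ]
    [Fintype ι] {U : Ω → ι → ℝ} (hWm : Measurable W) (hUm : Measurable U) (hVm : Measurable V)
    (hG : HasGaussianLaw (fun ω => (W ω, U ω, V ω)) μ) :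
    CondIndepFun (MeasurableSpace.comap W inferInstance) hWm.comap_le U V μ ↔
      CondOrthogonal (linearSpan μ W) (linearSpan μ U) (linearSpan μ V) :=
  ⟨condOrthogonal_of_condIndepFun hWm hUm hVm hG, condIndepFun_of_condOrthogonal hWm hUm hVm hG⟩

end Gaussian

section IsLinearImage

variable {Ω E F G : Type*} [NormedAddCommGroup E] [NormedSpace ℝ E] [NormedAddCommGroup F]
  [NormedSpace ℝ F] [NormedAddCommGroup G] [NormedSpace ℝ G]

/-- `X` is a continuous linear function of `Z`. Such variables are jointly Gaussian as soon as `Z`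
is Gaussian. -/
def IsLinearImage (Z : Ω → E) (X : Ω → F) : Prop :=
  ∃ A : E →L[ℝ] F, X = fun ω => A (Z ω)

namespace IsLinearImage

variable {Z : Ω → E}

lemma prodMk {X : Ω → F} {Y : Ω → G} (hX : IsLinearImage Z X) (hY : IsLinearImage Z Y) :
    IsLinearImage Z (fun ω => (X ω, Y ω)) := by
  obtain ⟨A, rfl⟩ := hX
  obtain ⟨B, rfl⟩ := hY
  exact ⟨A.prod B, rfl⟩

lemma pi {κ : Type*} [Fintype κ] {X : κ → Ω → F} (hX : ∀ j, IsLinearImage Z (X j)) :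
    IsLinearImage Z (fun ω j => X j ω) := by
  choose A hA using hX
  exact ⟨ContinuousLinearMap.pi A, funext fun ω => funext fun j => congrFun (hA j) ω⟩

lemma hasGaussianLaw [MeasurableSpace Ω] {μ : Measure Ω} [MeasurableSpace E] [BorelSpace E]
    [MeasurableSpace F] [BorelSpace F] {X : Ω → F} (hX : IsLinearImage Z X)
    (hZ : HasGaussianLaw Z μ) : HasGaussianLaw X μ := by
  obtain ⟨A, rfl⟩ := hX
  exact hZ.map_fun A

end IsLinearImage

end IsLinearImage

section TimeSeries

variable {Ω : Type*} [MeasurableSpace Ω] {μ : Measure Ω}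

lemma isOrtho_linearSpan_of_covM_eq_zero [IsProbabilityMeasure μ] {ι κ : Type*} [Fintype ι]
    [Fintype κ] {X : Ω → ι → ℝ} {Y : Ω → κ → ℝ} (hX : MemLp X 2 μ) (hY : MemLp Y 2 μ)
    (h : covM μ X Y = 0) : linearSpan μ X ⟂ linearSpan μ Y := by
  rw [linearSpan_pi (X := fun i ω => X ω i) hX.eval, linearSpan_pi (X := fun i ω => Y ω i) hY.eval]
  refine Submodule.isOrtho_iSup_left.2 fun i => Submodule.isOrtho_iSup_right.2 fun j =>
    (isOrtho_linearSpan_iff (hX.eval i) (hY.eval j)).2 fun L M => ?_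
  have hij : cov[fun ω => X ω i, fun ω => Y ω j; μ] = 0 := by
    rw [covariance_eq_sub (hX.eval i) (hY.eval j)]
    exact congrFun₂ h i j
  rw [funext fun ω => strongDual_apply_eq_mul L (X ω i),
    funext fun ω => strongDual_apply_eq_mul M (Y ω j), covariance_const_mul_left,
    covariance_const_mul_right, hij, mul_zero, mul_zero]

lemma IsGaussianVec.hasGaussianLaw {ι : Type*} [Fintype ι] {X : Ω → ι → ℝ} (hX : Measurable X)
    (h : IsGaussianVec μ X) : HasGaussianLaw X μ where
  isGaussian_map := by
    classical
    refine isGaussian_of_isGaussian_map fun L => ?_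
    obtain ⟨a, s, has⟩ := h fun i => L (Pi.single i 1)
    have hL : (fun ω => ∑ i, L (Pi.single i 1) * X ω i) = L ∘ X := by
      ext ω
      simp only [Function.comp_apply, mul_comm, ← smul_eq_mul, ← map_smul, ← map_sum,
        ← pi_eq_sum_univ' (X ω)]
    rw [Measure.map_map L.continuous.measurable hX, ← hL, has]
    infer_instance

variable {E F : Type*} [NormedAddCommGroup E] [NormedSpace ℝ E] [NormedAddCommGroup F]
  [NormedSpace ℝ F]

lemma linearSpan_window [CompleteSpace F] [IsFiniteMeasure μ] {Y : ℕ → Ω → F} {a b n : ℕ}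
    (hab : a + n = b) (hY : ∀ s, a ≤ s → s < b → MemLp (Y s) 2 μ) :
    linearSpan μ (fun ω (j : Fin n) => Y (a + (j : ℕ)) ω)
      = (Finset.Ico a b).sup fun s => linearSpan μ (Y s) := by
  rw [linearSpan_pi fun j => hY _ (by omega) (by omega)]
  refine le_antisymm (iSup_le fun j => Finset.le_sup (f := fun s => linearSpan μ (Y s))
    (Finset.mem_Ico.2 ⟨by omega, by omega⟩)) (Finset.sup_le fun s hs => ?_)
  rw [Finset.mem_Ico] at hs
  obtain ⟨j, rfl⟩ := Nat.exists_eq_add_of_le hs.1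
  exact le_iSup (fun j : Fin n => linearSpan μ (Y (a + j))) ⟨j, by omega⟩

lemma condIndepFun_window_iff_condOrthogonal [StandardBorelSpace Ω] [IsProbabilityMeasure μ]
    [FiniteDimensional ℝ E] [MeasurableSpace E] [BorelSpace E] {Z : Ω → E}
    (hZ : HasGaussianLaw Z μ) {ι : Type*} [Fintype ι] {Y : ℕ → Ω → ι → ℝ}
    (hYm : ∀ t, Measurable (Y t)) {T : ℕ} (hYZ : ∀ t, 1 ≤ t → t ≤ T → IsLinearImage Z (Y t))
    {a a' b b' m n t : ℕ} (ha : a + n = a') (hb : b + m = b') (ha1 : 1 ≤ a) (haT : a' ≤ T + 1)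
    (hb1 : 1 ≤ b) (hbT : b' ≤ T + 1) (ht1 : 1 ≤ t) (htT : t ≤ T) :
    CondIndepFun
        (MeasurableSpace.comap (fun ω (j : Fin n) => Y (a + (j : ℕ)) ω) inferInstance)
        (measurable_pi_lambda _ fun _ => hYm _).comap_le
        (Y t) (fun ω (j : Fin m) => Y (b + (j : ℕ)) ω) μ ↔
      CondOrthogonal ((Finset.Ico a a').sup fun s => linearSpan μ (Y s)) (linearSpan μ (Y t))
        ((Finset.Ico b b').sup fun s => linearSpan μ (Y s)) := by
  have hY2 : ∀ s, 1 ≤ s → s ≤ T → MemLp (Y s) 2 μ := fun s hs hsT =>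
    ((hYZ s hs hsT).hasGaussianLaw hZ).memLp_two
  have hWUV : HasGaussianLaw (fun ω => ((fun j : Fin n => Y (a + (j : ℕ)) ω), Y t ω,
      fun j : Fin m => Y (b + (j : ℕ)) ω)) μ :=
    ((IsLinearImage.pi fun j => hYZ _ (by omega) (by omega)).prodMk
      ((hYZ t ht1 htT).prodMk
        (IsLinearImage.pi fun j => hYZ _ (by omega) (by omega)))).hasGaussianLaw hZ
  rw [condIndepFun_iff_condOrthogonal (measurable_pi_lambda _ fun _ => hYm _) (hYm t)
      (measurable_pi_lambda _ fun _ => hYm _) hWUV,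
    linearSpan_window ha fun s _ _ => hY2 s (by omega) (by omega),
    linearSpan_window hb fun s _ _ => hY2 s (by omega) (by omega)]

end TimeSeries

theorem margin_closed_regime_switching_markov_order_general
    {Ω : Type*} [MeasurableSpace Ω] [StandardBorelSpace Ω]
    (μ : Measure Ω) [IsProbabilityMeasure μ]
    {ι α : Type*} [Fintype ι] (T k : ℕ) (hk : 0 < k) (v : ℕ → α)
    (Y : ℕ → Ω → ι → ℝ) (hYm : ∀ t, Measurable (Y t))
    (hGauss : IsGaussianVec μ (fun ω (q : Fin T × ι) => Y ((q.1 : ℕ) + 1) ω q.2))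
    (hwithin : ∀ t m, t ≤ T → k ≤ m → m + 1 ≤ t →
      (∀ s, t - m ≤ s → s ≤ t → v s = v t) →
      CondIndepFun
        (MeasurableSpace.comap
          (fun ω (j : Fin (k - 1)) => Y (t - k + 1 + (j : ℕ)) ω) inferInstance)
        ((measurable_pi_lambda _ fun _ => hYm _).comap_le)
        (Y t) (fun ω (j : Fin (m - k + 1)) => Y (t - m + (j : ℕ)) ω) μ)
    (hswitch : ∀ τ, 2 ≤ τ → τ ≤ T → v τ ≠ v (τ - 1) → ∀ s, 1 ≤ s → s + 2 ≤ τ →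
      CondIndepFun (MeasurableSpace.comap (Y (τ - 1)) inferInstance)
        ((hYm _).comap_le) (Y τ) (Y s) μ)
    (hafter : ∀ τ, 2 ≤ τ → τ ≤ T → v τ ≠ v (τ - 1) →
      ∀ j, 1 ≤ j → τ + j ≤ T → ∀ s, 1 ≤ s → s + 1 ≤ τ → covM μ (Y (τ + j)) (Y s) = 0)
    (t : ℕ) (hkt : k < t) (htT : t ≤ T) :
    CondIndepFun
      (MeasurableSpace.comap
        (fun ω (j : Fin k) => Y (t - k + (j : ℕ)) ω) inferInstance)
      ((measurable_pi_lambda _ fun _ => hYm _).comap_le)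
      (Y t) (fun ω (s : Fin (t - k - 1)) => Y ((s : ℕ) + 1) ω) μ := by
  have hZ : HasGaussianLaw (fun ω (q : Fin T × ι) => Y ((q.1 : ℕ) + 1) ω q.2) μ :=
    hGauss.hasGaussianLaw (by fun_prop)
  have hYZ : ∀ t, 1 ≤ t → t ≤ T →
      IsLinearImage (fun ω (q : Fin T × ι) => Y ((q.1 : ℕ) + 1) ω q.2) (Y t) := by
    intro t ht htT
    refine ⟨.pi fun i => .proj (R := ℝ) (φ := fun _ => ℝ) (⟨t - 1, by omega⟩, i), ?_⟩
    simp [Nat.sub_add_cancel ht]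
  have hY2 : ∀ t, 1 ≤ t → t ≤ T → MemLp (Y t) 2 μ := fun t ht htT =>
    ((hYZ t ht htT).hasGaussianLaw hZ).memLp_two
  simp only [Nat.add_comm _ 1]
  refine (condIndepFun_window_iff_condOrthogonal hZ hYm hYZ (a' := t) (b' := t - k) (by omega)
    (by omega) (by omega) (by omega) le_rfl (by omega) (by omega) htT).2
    (condOrthogonal_past v hk (fun t m htT hkm hmt hconst => ?_) (fun τ hτ hτT hv s hs hsτ => ?_)
      (fun τ hτ hτT hv j hj hjT s hs hsτ => ?_) hkt htT)
  · exact (condIndepFun_window_iff_condOrthogonal hZ hYm hYZ (by omega) (by omega) (by omega)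
      (by omega) (by omega) (by omega) (by omega) htT).1 (hwithin t m htT hkm hmt hconst)
  · exact (condIndepFun_iff_condOrthogonal (hYm _) (hYm τ) (hYm s)
      (((hYZ _ (by omega) (by omega)).prodMk ((hYZ τ (by omega) hτT).prodMk
        (hYZ s hs (by omega)))).hasGaussianLaw hZ)).1 (hswitch τ hτ hτT hv s hs hsτ)
  · exact isOrtho_linearSpan_of_covM_eq_zero (hY2 _ (by omega) hjT) (hY2 s hs (by omega))
      (hafter τ hτ hτT hv j hj hjT s hs hsτ)

/-- Proposition 1 of the paper, Markov-order part. Under the within-regime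
Markov-order-(k−1) condition and the regime-switching Conditions 3(a)–(c), the full process
`Y₁, …, Y_T` is Markov of order `k`. -/
theorem margin_closed_regime_switching_markov_order
    {Ω : Type*} [MeasurableSpace Ω] [StandardBorelSpace Ω]
    (Pr : Measure Ω) [IsProbabilityMeasure Pr]
    (d G T k : ℕ) (hd : 0 < d) (hG : 0 < G) (hk : 0 < k) (hT : k + 2 ≤ T)
    (v : ℕ → Fin G)
    (ρ : Fin d → ℝ) (hρ : ∀ i, ρ i ∈ Set.Ioo (-1 : ℝ) 1)
    (Y : ℕ → Ω → Fin d → ℝ) (hYm : ∀ t, Measurable (Y t))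
    (hGauss : IsGaussianVec Pr
      (fun ω (q : Fin T × Fin d) => Y ((q.1 : ℕ) + 1) ω q.2))
    (hmean : ∀ t, 1 ≤ t → t ≤ T → ∀ i, ∫ ω, Y t ω i ∂Pr = 0)
    (hposdef : (covM Pr (fun ω (q : Fin T × Fin d) => Y ((q.1 : ℕ) + 1) ω q.2)
        (fun ω (q : Fin T × Fin d) => Y ((q.1 : ℕ) + 1) ω q.2)).PosDef)
    -- (i) within-regime Markov order k − 1
    (hwithin : ∀ t m, t ≤ T → k ≤ m → m + 1 ≤ t →
      (∀ s, t - m ≤ s → s ≤ t → v s = v t) →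
      CondIndepFun
        (MeasurableSpace.comap
          (fun ω (j : Fin (k - 1)) => Y (t - k + 1 + (j : ℕ)) ω) inferInstance)
        ((measurable_pi_lambda _ fun _ => hYm _).comap_le)
        (Y t) (fun ω (j : Fin (m - k + 1)) => Y (t - m + (j : ℕ)) ω) Pr)
    -- (ii)(a)
    (hswitchA : ∀ tstar, 2 ≤ tstar → tstar ≤ T → v tstar ≠ v (tstar - 1) →
      covM Pr (Y tstar) (Y (tstar - 1))
        = Matrix.diagonal ρ * covM Pr (Y (tstar - 1)) (Y (tstar - 1)))
    -- (ii)(b)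
    (hswitchB : ∀ tstar, 2 ≤ tstar → tstar ≤ T → v tstar ≠ v (tstar - 1) →
      ∀ s, 1 ≤ s → s + 2 ≤ tstar →
      CondIndepFun (MeasurableSpace.comap (Y (tstar - 1)) inferInstance)
        ((hYm _).comap_le) (Y tstar) (Y s) Pr)
    -- (ii)(c)
    (hswitchC : ∀ tstar, 2 ≤ tstar → tstar ≤ T → v tstar ≠ v (tstar - 1) →
      ∀ j, 1 ≤ j → tstar + j ≤ T → ∀ s, 1 ≤ s → s + 1 ≤ tstar →
      covM Pr (Y (tstar + j)) (Y s) = 0) :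
    -- conclusion: the process is Markov of order k
    ∀ t, k + 2 ≤ t → t ≤ T →
      CondIndepFun
        (MeasurableSpace.comap
          (fun ω (j : Fin k) => Y (t - k + (j : ℕ)) ω) inferInstance)
        ((measurable_pi_lambda _ fun _ => hYm _).comap_le)
        (Y t) (fun ω (s : Fin (t - k - 1)) => Y ((s : ℕ) + 1) ω) Pr := by
  exact fun t hkt htT => margin_closed_regime_switching_markov_order_general Pr T k hk v Y
    hYm hGauss hwithin hswitchB hswitchC t (by omega) htT
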